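/- Let G be a group generated by a finite set S such that the Cayley graph Γ(G,S) is Gromov hyperbolic, and let H be a quasiconvex subgroup of G. Then the collection {H} has finite height, finite width, and bounded packing in G. -/

import Mathlib

open Pointwise

section BasicDefs

variable {G : Type*} [Group G]

/-- The word length of `g` with respect to the generating set `S`
(words use letters from `S ∪ S⁻¹`). -/
noncomputable def wordLength (S : Set G) (g : G) : ℕ :=
  sInf {n : ℕ | ∃ l : List G, l.length = n ∧ (∀ x ∈ l, x ∈ S ∨ x⁻¹ ∈ S) ∧ l.prod = g}

/-- The word metric on `G` with respect to the generating set `S`. -/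
noncomputable def wordDist (S : Set G) (g h : G) : ℝ :=
  (wordLength S (g⁻¹ * h) : ℝ)

/-- The closed `r`-neighborhood of a subset `A` with respect to the word metric `d_S`. -/
def nbhd (S : Set G) (r : ℝ) (A : Set G) : Set G :=
  {g : G | ∃ a ∈ A, wordDist S g a ≤ r}

/-- The distance between two subsets: the infimum of distances between their elements. -/
noncomputable def setDist (S : Set G) (A B : Set G) : ℝ :=
  sInf {r : ℝ | ∃ a ∈ A, ∃ b ∈ B, r = wordDist S a b}

/-- The conjugate subgroup `H^g = g H g⁻¹`. -/
def conjSub (g : G) (H : Subgroup G) : Subgroup G :=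
  H.map (MulAut.conj g).toMonoidHom

end BasicDefs

/-- `γ` restricted to `{0, …, n}` is a `(K, ε)`-quasigeodesic for the distance function `d`. -/
def IsQuasigeodesic {α : Type*} (d : α → α → ℝ) (K ε : ℝ) (n : ℕ) (γ : ℕ → α) : Prop :=
  ∀ i j : ℕ, i ≤ n → j ≤ n →
    (1 / K) * |(i : ℝ) - (j : ℝ)| - ε ≤ d (γ i) (γ j) ∧
      d (γ i) (γ j) ≤ K * |(i : ℝ) - (j : ℝ)| + ε

/-- `γ` restricted to `{0, …, n}` is a geodesic for the distance function `d`. -/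
def IsGeodesic {α : Type*} (d : α → α → ℝ) (n : ℕ) (γ : ℕ → α) : Prop :=
  ∀ i j : ℕ, i ≤ n → j ≤ n → d (γ i) (γ j) = |(i : ℝ) - (j : ℝ)|

/-- The path `γ` (on `{0, …, n}`) is `f`-stable: every `(K, ε)`-quasigeodesic with endpoints
on `γ` stays in the `f K ε`-neighborhood of `γ`. -/
def IsStablePath {α : Type*} (d : α → α → ℝ) (f : ℝ → ℝ → ℝ) (n : ℕ) (γ : ℕ → α) : Prop :=
  ∀ K ε : ℝ, 1 ≤ K → 0 ≤ ε → ∀ (m : ℕ) (η : ℕ → α),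
    IsQuasigeodesic d K ε m η →
    (∃ i ≤ n, η 0 = γ i) → (∃ i ≤ n, η m = γ i) →
    ∀ j ≤ m, ∃ i ≤ n, d (η j) (γ i) ≤ f K ε

/-- The Gromov product `⟨x, y⟩_w` with respect to a distance function `d`. -/
noncomputable def gromovProd {α : Type*} (d : α → α → ℝ) (w x y : α) : ℝ :=
  (d w x + d w y - d x y) / 2

/-- Gromov hyperbolicity of a distance function, via the four-point condition. -/
def IsHyperbolicDist {α : Type*} (d : α → α → ℝ) : Prop :=
  ∃ δ : ℝ, 0 ≤ δ ∧ ∀ w x y z : α,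
    min (gromovProd d w x y) (gromovProd d w y z) - δ ≤ gromovProd d w x z

section GroupDefs

variable {G : Type*} [Group G]

/-- `H` is a stable subgroup of `(G, d_S)` with stability function `f`: `H` has a finite
generating set `T` such that the inclusion `(H, d_T) → (G, d_S)` is a quasi-isometric
embedding sending every `d_T`-geodesic to an `f`-stable quasigeodesic of `(G, d_S)`. -/
def IsStableSubgroupWith (S : Set G) (H : Subgroup G) (f : ℝ → ℝ → ℝ) : Prop :=
  ∃ T : Set H, T.Finite ∧ Subgroup.closure T = ⊤ ∧
    (∃ μ c : ℝ, 1 ≤ μ ∧ 0 ≤ c ∧ ∀ h₁ h₂ : H,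
      (1 / μ) * wordDist T h₁ h₂ - c ≤ wordDist S (h₁ : G) (h₂ : G) ∧
        wordDist S (h₁ : G) (h₂ : G) ≤ μ * wordDist T h₁ h₂ + c) ∧
    ∀ (n : ℕ) (γ : ℕ → H), IsGeodesic (wordDist T) n γ →
      (∃ K ε : ℝ, 1 ≤ K ∧ 0 ≤ ε ∧
        IsQuasigeodesic (wordDist S) K ε n (fun i => (γ i : G))) ∧
      IsStablePath (wordDist S) f n (fun i => (γ i : G))

/-- `H` is a stable subgroup of `(G, d_S)`. -/
def IsStableSubgroup (S : Set G) (H : Subgroup G) : Prop :=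
  ∃ f : ℝ → ℝ → ℝ, IsStableSubgroupWith S H f

/-- The family `Q` of subgroups is hyperbolically embedded in `(G, X)`:
(Q1) geometric separation, (Q2) finite generation, (Q3) uniform quasi-isometric embedding. -/
def IsHypEmbFamily {G : Type*} [Group G] {ι : Type*} (X : Set G) (Q : ι → Subgroup G) : Prop :=
  (∀ ε : ℝ, 0 < ε → ∃ R : ℝ, ∀ (g : G) (i j : ι),
      (∃ a ∈ (Q i : Set G) ∩ nbhd X ε (g • (Q j : Set G)),
        ∃ b ∈ (Q i : Set G) ∩ nbhd X ε (g • (Q j : Set G)), R ≤ wordDist X a b) →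
      i = j ∧ g ∈ Q i) ∧
  ∃ Y : ι → Set G, (∀ i, (Y i).Finite ∧ Y i ⊆ (Q i : Set G) ∧ Subgroup.closure (Y i) = Q i) ∧
    ∃ μ c : ℝ, 1 ≤ μ ∧ 0 ≤ c ∧ ∀ i : ι, ∀ h ∈ Q i,
      (wordLength (Y i) h : ℝ) ≤ μ * (wordLength X h : ℝ) + c

/-- The subset `H` of `G` satisfies the WPD condition in `(G, X)`. -/
def WPDSet (X : Set G) (H : Set G) : Prop :=
  ∀ ε : ℝ, 0 < ε → ∃ N : ℝ, 0 < N ∧ ∀ h₁ h₂ : G, h₁ ∈ H → h₂ ∈ H →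
    N < wordDist X h₁ h₂ →
    {g : G | wordDist X h₁ (g * h₁) < ε ∧ wordDist X h₂ (g * h₂) < ε}.Finite

/-- A quasimorphism on `G`. -/
def IsQuasimorphism (q : G → ℝ) : Prop :=
  ∃ D : ℝ, 0 ≤ D ∧ ∀ x y : G, |q (x * y) - q x - q y| ≤ D

/-- A homogeneous quasimorphism on `G`. -/
def IsHomogeneousQM (q : G → ℝ) : Prop :=
  IsQuasimorphism q ∧ ∀ (x : G) (n : ℕ), q (x ^ n) = (n : ℝ) * q x

/-- `H` is a quasiconvex subgroup of `(G, d_S)`: every geodesic with endpoints in `H`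
lies in a uniformly bounded neighborhood of `H`. -/
def IsQuasiconvex (S : Set G) (H : Subgroup G) : Prop :=
  ∃ C : ℝ, 0 ≤ C ∧ ∀ (n : ℕ) (γ : ℕ → G), IsGeodesic (wordDist S) n γ →
    γ 0 ∈ H → γ n ∈ H → ∀ i ≤ n, ∃ h ∈ H, wordDist S (γ i) h ≤ C

end GroupDefs

/-!
In a hyperbolic space, quasiconvex sets satisfy a coarse Helly property: fix a base point and,
among finitely many pairwise close quasiconvex sets, take the one farthest from it. Its point
nearest to the base point is uniformly close to all the other sets. For cosets of a quasiconvex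
subgroup this puts translates of all of them in one ball, whose cardinality bounds their number;
that is bounded packing.

An infinite intersection `H^g ∩ H^g'` contains an `x` moving `g` arbitrarily far. The geodesic from
`g` to `x * g` has its endpoints in `gH`, and fellow-travels in its middle part a geodesic from `g'`
to `x * g'`, whose endpoints are in `g'H`. Hence the two cosets are close by an amount independent
of `g` and `g'`, and bounded packing yields finite width. Finite width yields finite height, as an
infinite intersection of several conjugates makes all pairwise intersections infinite.
-/

section Hyperbolic

variable {X : Type*} [PseudoMetricSpace X] {δ C : ℝ} {A B : Set X}

/-- The four-point condition of `IsHyperbolicDist`, with its constant `δ` made explicit. -/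
def IsHyperbolicWith (X : Type*) [PseudoMetricSpace X] (δ : ℝ) : Prop :=
  ∀ w x y z : X, min (gromovProd dist w x y) (gromovProd dist w y z) - δ ≤ gromovProd dist w x z

/-- `C`-quasiconvexity of a subset of a metric space, tested on the geodesics of `IsGeodesic`, which
are parametrized by initial segments of `ℕ`. -/
def IsQuasiconvexWith (C : ℝ) (A : Set X) : Prop :=
  ∀ (n : ℕ) (γ : ℕ → X), IsGeodesic dist n γ → γ 0 ∈ A → γ n ∈ A →
    ∀ i ≤ n, ∃ a ∈ A, dist (γ i) a ≤ C

/-- Any two points are the ends of a geodesic parametrized by an initial segment of `ℕ`, as in the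
vertex set of a connected graph. -/
def IsDiscretelyGeodesic (X : Type*) [PseudoMetricSpace X] : Prop :=
  ∀ x y : X, ∃ (n : ℕ) (γ : ℕ → X), IsGeodesic dist n γ ∧ γ 0 = x ∧ γ n = y

theorem gromovProd_nonneg (w x y : X) : 0 ≤ gromovProd dist w x y := by
  unfold gromovProd
  linarith [dist_triangle_left x y w]

theorem gromovProd_le_dist_right (w x y : X) : gromovProd dist w x y ≤ dist w y := by
  unfold gromovProd
  linarith [dist_triangle_right w x y]

theorem gromovProd_comm (w x y : X) : gromovProd dist w x y = gromovProd dist w y x := by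
  rw [gromovProd, gromovProd, dist_comm x y, add_comm (dist w x)]

theorem dist_sub_dist_le_gromovProd (w x y : X) : dist w x - dist x y ≤ gromovProd dist w x y := by
  unfold gromovProd
  linarith [dist_triangle_right w x y]

theorem IsGeodesic.dist_eq_sub {α : Type*} {d : α → α → ℝ} {n i j : ℕ} {γ : ℕ → α}
    (hγ : IsGeodesic d n γ) (hij : i ≤ j) (hj : j ≤ n) : d (γ i) (γ j) = j - i := by
  rw [hγ i j (hij.trans hj) hj, abs_sub_comm, abs_of_nonneg (by simpa using hij)]

theorem IsGeodesic.dist_zero {α : Type*} {d : α → α → ℝ} {n i : ℕ} {γ : ℕ → α}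
    (hγ : IsGeodesic d n γ) (hi : i ≤ n) : d (γ 0) (γ i) = i := by
  simpa using hγ.dist_eq_sub (Nat.zero_le i) hi

theorem isGeodesic_of_dist_succ_le {n : ℕ} {γ : ℕ → X}
    (hstep : ∀ i < n, dist (γ i) (γ (i + 1)) ≤ 1) (hends : n ≤ dist (γ 0) (γ n)) :
    IsGeodesic dist n γ := by
  have upper {i j : ℕ} (hij : i ≤ j) (hj : j ≤ n) : dist (γ i) (γ j) ≤ j - i := by
    simpa [Nat.cast_sub hij] using
      dist_le_Ico_sum_of_dist_le (f := γ) hij (d := fun _ ↦ 1) fun _ hk ↦ hstep _ (hk.trans_le hj)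
  have exact_dist {i j : ℕ} (hij : i ≤ j) (hj : j ≤ n) : dist (γ i) (γ j) = j - i := by
    have head := upper (Nat.zero_le i) (hij.trans hj)
    have tail := upper hj le_rfl
    rw [Nat.cast_zero] at head
    linarith [upper hij hj, dist_triangle4 (γ 0) (γ i) (γ j) (γ n)]
  intro i j hi hj
  rcases le_total i j with h | h
  · rw [exact_dist h hj, abs_sub_comm, abs_of_nonneg (by simpa using h)]
  · rw [dist_comm, exact_dist h hi, abs_of_nonneg (by simpa using h)]

theorem IsDiscretelyGeodesic.exists_isMinOn_dist (hX : IsDiscretelyGeodesic X) (x : X)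
    (hA : A.Nonempty) : ∃ p ∈ A, IsMinOn (dist x) A p := by
  have integral (y : X) : ∃ n : ℕ, dist x y = n := by
    obtain ⟨n, γ, hγ, rfl, rfl⟩ := hX x y
    exact ⟨n, hγ.dist_zero le_rfl⟩
  choose f hf using integral
  obtain ⟨p, hp, hmin⟩ := exists_minimalFor_of_wellFoundedLT (· ∈ A) f hA
  refine ⟨p, hp, isMinOn_iff.2 fun y hy ↦ ?_⟩
  rw [hf, hf, Nat.cast_le]
  exact (le_total (f p) (f y)).elim id (hmin hy)

protected theorem IsQuasiconvexWith.nonneg (hA : IsQuasiconvexWith C A) (hne : A.Nonempty) :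
    0 ≤ C := by
  obtain ⟨a, ha⟩ := hne
  obtain ⟨b, -, hab⟩ := hA 0 (fun _ ↦ a) (by simp [IsGeodesic]) ha ha 0 le_rfl
  exact dist_nonneg.trans hab

theorem IsQuasiconvexWith.smul {M : Type*} [Group M] [MulAction M X] [IsIsometricSMul M X]
    (hA : IsQuasiconvexWith C A) (g : M) : IsQuasiconvexWith C (g • A) := by
  intro n γ hγ h₀ hₙ i hi
  rw [Set.mem_smul_set_iff_inv_smul_mem] at h₀ hₙ
  have hγ' : IsGeodesic dist n fun k ↦ g⁻¹ • γ k := by simpa [IsGeodesic] using hγ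
  obtain ⟨a, ha, hdist⟩ := hA n _ hγ' h₀ hₙ i hi
  refine ⟨g • a, Set.smul_mem_smul_set ha, ?_⟩
  rwa [← dist_smul g⁻¹, inv_smul_smul]

namespace IsHyperbolicWith

protected theorem nonneg [Nonempty X] (hδ : IsHyperbolicWith X δ) : 0 ≤ δ := by
  inhabit X
  simpa [gromovProd] using hδ default default default default

theorem min_min_gromovProd_le (hδ : IsHyperbolicWith X δ) (w x y z t : X) :
    min (gromovProd dist w x y) (min (gromovProd dist w y z) (gromovProd dist w z t)) - 2 * δ ≤
      gromovProd dist w x t := by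
  have hyzt := hδ w y z t
  have hxyt := hδ w x y t
  have : Nonempty X := ⟨w⟩
  have δ_nonneg := hδ.nonneg
  grind

theorem exists_dist_le_gromovProd_of_isGeodesic (hδ : IsHyperbolicWith X δ) {n : ℕ} {γ : ℕ → X}
    (hγ : IsGeodesic dist n γ) (x : X) :
    ∃ i ≤ n, dist x (γ i) ≤ gromovProd dist x (γ 0) (γ n) + 1 + 2 * δ := by
  -- The point is the one where the inscribed circle of the triangle `γ 0`, `γ n`, `x` would touch
  -- the side `γ`, rounded down to an integer time.
  set s := gromovProd dist (γ 0) x (γ n) with hs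
  have hsn : s ≤ n := hγ.dist_zero le_rfl ▸ gromovProd_le_dist_right _ _ _
  have floor_le : (⌊s⌋₊ : ℝ) ≤ s := Nat.floor_le (gromovProd_nonneg _ _ _)
  have hi : ⌊s⌋₊ ≤ n := by exact_mod_cast floor_le.trans hsn
  refine ⟨⌊s⌋₊, hi, ?_⟩
  have on_side : gromovProd dist (γ 0) (γ n) (γ ⌊s⌋₊) = ⌊s⌋₊ := by
    rw [gromovProd, dist_comm (γ n), hγ.dist_eq_sub hi le_rfl, hγ.dist_zero hi, hγ.dist_zero le_rfl]
    ring
  have key := hδ (γ 0) x (γ n) (γ ⌊s⌋₊)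
  rw [on_side, ← hs, min_eq_right floor_le] at key
  unfold gromovProd at key hs ⊢
  linarith [Nat.lt_floor_add_one s, hγ.dist_zero hi, dist_comm x (γ 0), dist_comm x (γ n)]

theorem exists_mem_dist_le_gromovProd (hδ : IsHyperbolicWith X δ) (hX : IsDiscretelyGeodesic X)
    (hA : IsQuasiconvexWith C A) (x : X) {p q : X} (hp : p ∈ A) (hq : q ∈ A) :
    ∃ a ∈ A, dist x a ≤ gromovProd dist x p q + 1 + 2 * δ + C := by
  obtain ⟨n, γ, hγ, rfl, rfl⟩ := hX p q
  obtain ⟨i, hi, hxi⟩ := hδ.exists_dist_le_gromovProd_of_isGeodesic hγ x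
  obtain ⟨a, ha, hia⟩ := hA n γ hγ hp hq i hi
  exact ⟨a, ha, (dist_triangle x (γ i) a).trans (by linarith)⟩

theorem gromovProd_le_of_isMinOn (hδ : IsHyperbolicWith X δ) (hX : IsDiscretelyGeodesic X)
    (hA : IsQuasiconvexWith C A) {x z b : X} (hz : z ∈ A) (hmin : IsMinOn (dist x) A z)
    (hb : b ∈ A) : gromovProd dist z x b ≤ 1 + 2 * δ + C := by
  obtain ⟨a, ha, hxa⟩ := hδ.exists_mem_dist_le_gromovProd hX hA x hz hb
  unfold gromovProd at hxa ⊢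
  linarith [isMinOn_iff.1 hmin a ha, dist_comm x z]

theorem exists_mem_dist_le_of_isMinOn (hδ : IsHyperbolicWith X δ) (hX : IsDiscretelyGeodesic X)
    (hA : IsQuasiconvexWith C A) (hB : IsQuasiconvexWith C B) {D : ℝ} {x z p a b : X}
    (hz : z ∈ A) (hmin : IsMinOn (dist x) A z) (hp : p ∈ B) (hpz : dist x p ≤ dist x z)
    (ha : a ∈ A) (hb : b ∈ B) (hab : dist a b ≤ D) :
    ∃ c ∈ B, dist z c ≤ 3 + 8 * δ + 3 * C + 2 * D := by
  have hzx_a : gromovProd dist z x a ≤ 1 + 2 * δ + C :=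
    hδ.gromovProd_le_of_isMinOn hX hA hz hmin ha
  have hzx_b : gromovProd dist z x b ≤ 1 + 2 * δ + C + D := by
    unfold gromovProd at hzx_a ⊢
    linarith [dist_triangle z a b, dist_triangle_right x a b]
  have hzp : dist z p ≤ 2 * gromovProd dist z x p := by
    unfold gromovProd
    linarith [dist_comm x z]
  have : Nonempty X := ⟨z⟩
  have δ_nonneg := hδ.nonneg
  have D_nonneg : 0 ≤ D := dist_nonneg.trans hab
  obtain ⟨c, hc, hzc⟩ := hδ.exists_mem_dist_le_gromovProd hX hB z hp hb
  rcases min_le_iff.1 (sub_le_iff_le_add.1 (hδ z x p b)) with hxp | hpb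
  · exact ⟨p, hp, by linarith [gromovProd_nonneg z x a]⟩
  · exact ⟨c, hc, by linarith [gromovProd_nonneg z x a]⟩

/-- The coarse Helly property. -/
theorem exists_forall_mem_dist_le (hδ : IsHyperbolicWith X δ) (hX : IsDiscretelyGeodesic X)
    {ι : Type*} [Finite ι] [Nonempty ι] {A : ι → Set X} (hA : ∀ i, IsQuasiconvexWith C (A i))
    {D : ℝ} (hclose : ∀ i j, ∃ a ∈ A i, ∃ b ∈ A j, dist a b ≤ D) :
    ∃ z, ∀ i, ∃ a ∈ A i, dist z a ≤ 3 + 8 * δ + 3 * C + 2 * D := by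
  have hne (i : ι) : (A i).Nonempty := let ⟨a, ha, _⟩ := hclose i i; ⟨a, ha⟩
  obtain ⟨x, -⟩ := hne (Classical.arbitrary ι)
  choose p hp hmin using fun i ↦ hX.exists_isMinOn_dist x (hne i)
  obtain ⟨m, hm⟩ := Finite.exists_max fun i ↦ dist x (p i)
  refine ⟨p m, fun i ↦ ?_⟩
  obtain ⟨a, ha, b, hb, hab⟩ := hclose m i
  exact hδ.exists_mem_dist_le_of_isMinOn hX (hA m) (hA i) (hp m) (hmin m) (hp i) (hm i) ha hb hab

theorem exists_dist_le_of_endpoints_close (hδ : IsHyperbolicWith X δ) (hX : IsDiscretelyGeodesic X)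
    (hA : IsQuasiconvexWith C A) (hB : IsQuasiconvexWith C B) {R : ℝ} {u u' v v' : X}
    (hu : u ∈ A) (hu' : u' ∈ A) (hv : v ∈ B) (hv' : v' ∈ B) (huv : dist u v ≤ R)
    (huv' : dist u' v' ≤ R) (hfar : 2 * (R + 2 * δ + 1) ≤ dist u u') :
    ∃ a ∈ A, ∃ b ∈ B, dist a b ≤ 1 + 4 * δ + 2 * C := by
  obtain ⟨n, γ, hγ, rfl, rfl⟩ := hX u u'
  rw [hγ.dist_zero le_rfl] at hfar
  have : Nonempty X := ⟨v⟩
  have δ_nonneg := hδ.nonneg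
  have R_nonneg : 0 ≤ R := dist_nonneg.trans huv
  -- The point `γ i` is farther than `R + 2 * δ` from both ends of `γ`, so the two short sides of
  -- the quadrilateral drop out of the minimum in the four-point condition.
  set i := ⌊R + 2 * δ⌋₊ + 1
  have hRi : R + 2 * δ < i := by exact_mod_cast Nat.lt_floor_add_one (R + 2 * δ)
  have hiR : (i : ℝ) ≤ R + 2 * δ + 1 := by
    simpa [i] using Nat.floor_le (show 0 ≤ R + 2 * δ by linarith)
  have hin : i ≤ n := by
    have : (i : ℝ) ≤ n := by linarith
    exact_mod_cast this
  have dist_start : dist (γ i) (γ 0) = i := by rw [dist_comm, hγ.dist_zero hin]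
  have dist_end : dist (γ i) (γ n) = n - i := hγ.dist_eq_sub hin le_rfl
  have on_side : gromovProd dist (γ i) (γ 0) (γ n) = 0 := by
    rw [gromovProd, dist_start, dist_end, hγ.dist_zero le_rfl]
    ring
  have start_far := dist_sub_dist_le_gromovProd (γ i) (γ 0) v
  have end_far : dist (γ i) (γ n) - dist (γ n) v' ≤ gromovProd dist (γ i) v' (γ n) := by
    rw [gromovProd_comm]
    exact dist_sub_dist_le_gromovProd (γ i) (γ n) v'
  have opposite_side : gromovProd dist (γ i) v v' ≤ 2 * δ := by
    have key := hδ.min_min_gromovProd_le (γ i) (γ 0) v v' (γ n)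
    grind
  obtain ⟨a, ha, hia⟩ := hA n γ hγ hu hu' i hin
  obtain ⟨b, hb, hib⟩ := hδ.exists_mem_dist_le_gromovProd hX hB (γ i) hv hv'
  exact ⟨a, ha, b, hb, (dist_triangle_left a b (γ i)).trans (by linarith)⟩

end IsHyperbolicWith

end Hyperbolic

section LeftInvariant

open Metric

variable {G : Type*} [Group G]

theorem mul_mem_leftCoset_of_mem_conjSub {H : Subgroup G} {g x : G} (hx : x ∈ conjSub g H) :
    x * g ∈ g • (H : Set G) := by
  obtain ⟨h, hh, rfl⟩ := hx
  simpa [mem_leftCoset_iff] using hh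

variable [PseudoMetricSpace G] [IsIsometricSMul G G] {δ C : ℝ}

theorem finite_setOf_dist_mul_le {r : ℝ} (hball : (closedBall (1 : G) r).Finite) (u : G) :
    {x : G | dist u (x * u) ≤ r}.Finite := by
  refine (hball.image (MulAut.conj u)).subset fun x hx ↦ ⟨u⁻¹ * (x * u), ?_, by simp [mul_assoc]⟩
  rwa [mem_closedBall', ← dist_mul_left u, mul_one, mul_inv_cancel_left]

theorem exists_dist_le_of_infinite_inter_conjSub (hδ : IsHyperbolicWith G δ)
    (hG : IsDiscretelyGeodesic G) (hball : ∀ r, (closedBall (1 : G) r).Finite) {H K : Subgroup G}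
    (hH : IsQuasiconvexWith C (H : Set G)) (hK : IsQuasiconvexWith C (K : Set G)) {u v : G}
    (hinf : ((conjSub u H : Set G) ∩ (conjSub v K : Set G)).Infinite) :
    ∃ a ∈ u • (H : Set G), ∃ b ∈ v • (K : Set G), dist a b ≤ 1 + 4 * δ + 2 * C := by
  obtain ⟨x, ⟨hxu, hxv⟩, hfar⟩ := hinf.exists_notMem_finite
    (finite_setOf_dist_mul_le (hball (2 * (dist u v + 2 * δ + 1))) u)
  exact hδ.exists_dist_le_of_endpoints_close hG (hH.smul u) (hK.smul v)
    (mem_own_leftCoset H.toSubmonoid u) (mul_mem_leftCoset_of_mem_conjSub hxu)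
    (mem_own_leftCoset K.toSubmonoid v) (mul_mem_leftCoset_of_mem_conjSub hxv)
    le_rfl (dist_mul_left x u v).le (not_le.1 hfar).le

theorem card_le_ncard_closedBall_of_leftCosets_meet {H : Subgroup G} {ι : Type*} {g : ι → G}
    (hg : Pairwise fun i j ↦ g i • (H : Set G) ≠ g j • (H : Set G)) {r : ℝ}
    (hball : (closedBall (1 : G) r).Finite) {z : G}
    (hz : ∀ i, ∃ a ∈ g i • (H : Set G), dist z a ≤ r) :
    Nat.card ι ≤ (closedBall (1 : G) r).ncard := by
  choose a ha hza using hz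
  have coset_eq (i : ι) : g i • (H : Set G) = a i • (H : Set G) :=
    (leftCoset_eq_iff H).2 ((mem_leftCoset_iff _).1 (ha i))
  rw [← Set.ncard_univ]
  refine Set.ncard_le_ncard_of_injOn (fun i ↦ z⁻¹ * a i) (fun i _ ↦ ?_) (fun i _ j _ hij ↦ ?_) hball
  · rw [mem_closedBall', ← dist_mul_left z, mul_one, mul_inv_cancel_left]
    exact hza i
  · by_contra hne
    exact hg hne (by rw [coset_eq i, coset_eq j, mul_left_cancel hij])

theorem card_le_ncard_closedBall_of_leftCosets_close (hδ : IsHyperbolicWith G δ)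
    (hG : IsDiscretelyGeodesic G) {H : Subgroup G} (hH : IsQuasiconvexWith C (H : Set G)) {D : ℝ}
    (hD : 0 ≤ D) (hball : (closedBall (1 : G) (3 + 8 * δ + 3 * C + 2 * D)).Finite)
    {ι : Type*} [Finite ι] {g : ι → G}
    (hg : Pairwise fun i j ↦ g i • (H : Set G) ≠ g j • (H : Set G))
    (hclose : Pairwise fun i j ↦ ∃ a ∈ g i • (H : Set G), ∃ b ∈ g j • (H : Set G), dist a b ≤ D) :
    Nat.card ι ≤ (closedBall (1 : G) (3 + 8 * δ + 3 * C + 2 * D)).ncard := by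
  rcases isEmpty_or_nonempty ι with _ | _
  · simp
  have hclose' (i j : ι) : ∃ a ∈ g i • (H : Set G), ∃ b ∈ g j • (H : Set G), dist a b ≤ D := by
    rcases eq_or_ne i j with rfl | hij
    · have hi := mem_own_leftCoset H.toSubmonoid (g i)
      exact ⟨g i, hi, g i, hi, by rwa [dist_self]⟩
    · exact hclose hij
  obtain ⟨z, hz⟩ := hδ.exists_forall_mem_dist_le hG (fun i ↦ hH.smul (g i)) hclose'
  exact card_le_ncard_closedBall_of_leftCosets_meet hg hball hz

theorem card_le_ncard_closedBall_of_infinite_inter_conjSub (hδ : IsHyperbolicWith G δ)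
    (hG : IsDiscretelyGeodesic G) (hball : ∀ r, (closedBall (1 : G) r).Finite) {H : Subgroup G}
    (hH : IsQuasiconvexWith C (H : Set G)) {ι : Type*} [Finite ι] {g : ι → G}
    (hg : Pairwise fun i j ↦ g i • (H : Set G) ≠ g j • (H : Set G))
    (hinf : Pairwise fun i j ↦ ((conjSub (g i) H : Set G) ∩ (conjSub (g j) H : Set G)).Infinite) :
    Nat.card ι ≤ (closedBall (1 : G) (5 + 16 * δ + 7 * C)).ncard := by
  have closeness_nonneg : 0 ≤ 1 + 4 * δ + 2 * C := by
    linarith [hδ.nonneg, hH.nonneg ⟨1, H.one_mem⟩]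
  have radius : 5 + 16 * δ + 7 * C = 3 + 8 * δ + 3 * C + 2 * (1 + 4 * δ + 2 * C) := by ring
  rw [radius]
  exact card_le_ncard_closedBall_of_leftCosets_close hδ hG hH closeness_nonneg (hball _) hg
    fun i j hij ↦ exists_dist_le_of_infinite_inter_conjSub hδ hG hball hH hH (hinf hij)

end LeftInvariant

section WordMetric

variable {G : Type*} [Group G] {S : Set G}

theorem wordLength_prod_le {l : List G} (hl : ∀ x ∈ l, x ∈ S ∨ x⁻¹ ∈ S) :
    wordLength S l.prod ≤ l.length :=
  Nat.sInf_le ⟨l, rfl, hl, rfl⟩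

theorem exists_list_length_eq_wordLength (hS : Subgroup.closure S = ⊤) (g : G) :
    ∃ l : List G, l.length = wordLength S g ∧ (∀ x ∈ l, x ∈ S ∨ x⁻¹ ∈ S) ∧ l.prod = g := by
  have hg : g ∈ Submonoid.closure (S ∪ S⁻¹) := by
    rw [← Subgroup.closure_toSubmonoid, hS]
    trivial
  obtain ⟨l, hl, hprod⟩ := Submonoid.exists_list_of_mem_closure hg
  exact Nat.sInf_mem (s := {n | ∃ l : List G, l.length = n ∧ _ ∧ _}) ⟨l.length, l, rfl, hl, hprod⟩

@[simp]
theorem wordLength_one : wordLength S 1 = 0 := by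
  simpa using wordLength_prod_le (S := S) (l := []) (by simp)

theorem wordLength_eq_zero (hS : Subgroup.closure S = ⊤) {g : G} :
    wordLength S g = 0 ↔ g = 1 := by
  refine ⟨fun h ↦ ?_, fun h ↦ h ▸ wordLength_one⟩
  obtain ⟨l, hlen, -, rfl⟩ := exists_list_length_eq_wordLength hS g
  simp [List.length_eq_zero_iff.1 (hlen.trans h)]

theorem wordLength_mul_le (hS : Subgroup.closure S = ⊤) (g h : G) :
    wordLength S (g * h) ≤ wordLength S g + wordLength S h := by
  obtain ⟨l, hlen, hl, rfl⟩ := exists_list_length_eq_wordLength hS g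
  obtain ⟨l', hlen', hl', rfl⟩ := exists_list_length_eq_wordLength hS h
  rw [← hlen, ← hlen', ← List.prod_append, ← List.length_append]
  exact wordLength_prod_le fun x hx ↦ (List.mem_append.1 hx).elim (hl x) (hl' x)

theorem wordLength_inv (hS : Subgroup.closure S = ⊤) (g : G) :
    wordLength S g⁻¹ = wordLength S g := by
  have le (h : G) : wordLength S h⁻¹ ≤ wordLength S h := by
    obtain ⟨l, hlen, hl, rfl⟩ := exists_list_length_eq_wordLength hS h
    rw [List.prod_inv_reverse, ← hlen]
    refine (wordLength_prod_le fun x hx ↦ ?_).trans_eq (by simp)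
    simpa using (hl x⁻¹ (by simpa using hx)).symm
  exact (le g).antisymm (by simpa using le g⁻¹)

theorem finite_setOf_wordLength_le (hfin : S.Finite) (hS : Subgroup.closure S = ⊤) (n : ℕ) :
    {g : G | wordLength S g ≤ n}.Finite := by
  have : Finite ↥(S ∪ S⁻¹) := hfin.union hfin.inv
  refine ((List.finite_length_le ↥(S ∪ S⁻¹) n).image fun l ↦ (l.map (↑)).prod).subset fun g hg ↦ ?_
  obtain ⟨l, hlen, hl, rfl⟩ := exists_list_length_eq_wordLength hS g
  lift l to List ↥(S ∪ S⁻¹) using hl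
  have hln : l.length ≤ n := by simpa using hlen.trans_le hg
  exact ⟨l, hln, rfl⟩

theorem exists_wordDist_lt_of_setDist_lt {A B : Set G} (hA : A.Nonempty) (hB : B.Nonempty) {D : ℝ}
    (h : setDist S A B < D) : ∃ a ∈ A, ∃ b ∈ B, wordDist S a b < D := by
  have hne : {r | ∃ a ∈ A, ∃ b ∈ B, r = wordDist S a b}.Nonempty :=
    let ⟨a, ha⟩ := hA; let ⟨b, hb⟩ := hB; ⟨_, a, ha, b, hb, rfl⟩
  obtain ⟨_, ⟨a, ha, b, hb, rfl⟩, hlt⟩ := exists_lt_of_csInf_lt hne h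
  exact ⟨a, ha, b, hb, hlt⟩

/-- The metric space structure on `G` whose distance is `wordDist S`, for a generating set `S`. It
is not an instance because it depends on `S`. -/
noncomputable abbrev wordMetricSpace (hS : Subgroup.closure S = ⊤) : MetricSpace G where
  dist := wordDist S
  dist_self g := by simp [wordDist]
  dist_comm g h := by rw [wordDist, ← wordLength_inv hS, mul_inv_rev, inv_inv, wordDist]
  dist_triangle g h k := by
    have := wordLength_mul_le hS (g⁻¹ * h) (h⁻¹ * k)
    rw [mul_assoc, mul_inv_cancel_left] at this
    simpa only [wordDist, ← Nat.cast_add, Nat.cast_le] using this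
  eq_of_dist_eq_zero {g h} hgh := by
    rwa [wordDist, Nat.cast_eq_zero, wordLength_eq_zero hS, inv_mul_eq_one] at hgh

theorem isIsometricSMul_wordMetricSpace (hS : Subgroup.closure S = ⊤) :
    letI := wordMetricSpace hS
    IsIsometricSMul G G := by
  let := wordMetricSpace hS
  refine ⟨fun x ↦ Isometry.of_dist_eq fun g h ↦ ?_⟩
  change wordDist S (x * g) (x * h) = wordDist S g h
  simp [wordDist, mul_assoc]

theorem isDiscretelyGeodesic_wordMetricSpace (hS : Subgroup.closure S = ⊤) :
    letI := wordMetricSpace hS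
    IsDiscretelyGeodesic G := by
  let := wordMetricSpace hS
  intro g h
  obtain ⟨l, hlen, hl, hprod⟩ := exists_list_length_eq_wordLength hS (g⁻¹ * h)
  have hend : g * (l.take l.length).prod = h := by simp [hprod]
  refine ⟨l.length, fun i ↦ g * (l.take i).prod, isGeodesic_of_dist_succ_le (fun i hi ↦ ?_) ?_,
    by simp, hend⟩
  · change (wordLength S _ : ℝ) ≤ 1
    have letter : wordLength S l[i] ≤ 1 := by
      simpa using wordLength_prod_le (S := S) (l := [l[i]]) (by simpa using hl _ (l.getElem_mem hi))
    rw [List.prod_take_succ l i hi]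
    simpa [mul_assoc] using letter
  · change (l.length : ℝ) ≤ (wordLength S _ : ℝ)
    simp only [hend, List.take_zero, List.prod_nil, mul_one]
    rw [hlen]

theorem finite_closedBall_wordMetricSpace (hfin : S.Finite) (hS : Subgroup.closure S = ⊤)
    (r : ℝ) :
    letI := wordMetricSpace hS
    (Metric.closedBall (1 : G) r).Finite := by
  let := wordMetricSpace hS
  refine (finite_setOf_wordLength_le hfin hS ⌊r⌋₊).subset fun g hg ↦ Nat.le_floor ?_
  rw [Metric.mem_closedBall'] at hg
  simpa [dist, wordDist] using hg

end WordMetric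

/-- **Quasiconvex subgroups of hyperbolic groups.** A quasiconvex subgroup of a hyperbolic
group has finite height, finite width, and bounded packing. -/
theorem quasiconvex_height_width_packing {G : Type*} [Group G] (S : Set G)
    (hSfin : S.Finite) (hSgen : Subgroup.closure S = ⊤)
    (hhyp : IsHyperbolicDist (wordDist S)) (H : Subgroup G) (hqc : IsQuasiconvex S H) :
    (∃ n : ℕ, ∀ (k : ℕ) (g : Fin k → G),
      (∀ i j : Fin k, i ≠ j → g i • (H : Set G) ≠ g j • (H : Set G)) →
      n + 1 ≤ k → (⋂ i : Fin k, (conjSub (g i) H : Set G)).Finite) ∧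
    (∃ n : ℕ, ∀ (k : ℕ) (g : Fin k → G),
      (∀ i j : Fin k, i ≠ j → g i • (H : Set G) ≠ g j • (H : Set G)) →
      (∀ i j : Fin k, i ≠ j →
        ((conjSub (g i) H : Set G) ∩ (conjSub (g j) H : Set G)).Infinite) →
      k ≤ n) ∧
    (∀ D : ℝ, 0 ≤ D → ∃ N : ℕ, ∀ g : Fin N → G,
      (∀ i j : Fin N, i ≠ j → g i • (H : Set G) ≠ g j • (H : Set G)) →
      ∃ i j : Fin N, i ≠ j ∧ D ≤ setDist S (g i • (H : Set G)) (g j • (H : Set G))) := by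
  let := wordMetricSpace hSgen
  have := isIsometricSMul_wordMetricSpace hSgen
  have hG := isDiscretelyGeodesic_wordMetricSpace hSgen
  have hball := finite_closedBall_wordMetricSpace hSfin hSgen
  obtain ⟨δ, -, hδ⟩ : ∃ δ, 0 ≤ δ ∧ IsHyperbolicWith G δ := hhyp
  obtain ⟨C, -, hH⟩ : ∃ C, 0 ≤ C ∧ IsQuasiconvexWith C (H : Set G) := hqc
  have width {k : ℕ} {g : Fin k → G} :=
    card_le_ncard_closedBall_of_infinite_inter_conjSub hδ hG hball hH (g := g)
  have packing {D : ℝ} (hD : 0 ≤ D) {k : ℕ} {g : Fin k → G} :=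
    card_le_ncard_closedBall_of_leftCosets_close hδ hG hH hD (hball _) (g := g)
  simp only [Nat.card_fin] at width packing
  refine ⟨⟨(Metric.closedBall (1 : G) (5 + 16 * δ + 7 * C)).ncard, fun k g hg hk ↦ ?_⟩,
    ⟨_, fun k g hg hinf ↦ width hg hinf⟩,
    fun D hD ↦ ⟨(Metric.closedBall (1 : G) (3 + 8 * δ + 3 * C + 2 * D)).ncard + 1, fun g hg ↦ ?_⟩⟩
  · by_contra hinf
    exact hk.not_gt <| Nat.lt_succ_of_le <| width hg fun i j _ ↦
      .mono (Set.subset_inter (Set.iInter_subset _ i) (Set.iInter_subset _ j)) hinf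
  · by_contra! hnear
    refine (packing hD hg fun i j hij ↦ ?_).not_gt (Nat.lt_succ_self _)
    obtain ⟨a, ha, b, hb, hab⟩ := exists_wordDist_lt_of_setDist_lt
      ⟨_, mem_own_leftCoset H.toSubmonoid (g i)⟩ ⟨_, mem_own_leftCoset H.toSubmonoid (g j)⟩
      (hnear i j hij)
    exact ⟨a, ha, b, hb, hab.le⟩
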